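/- Let 𝒯 be a backward linear transfer on P(X) × P(X) with Kantorovich operator T and finite Mather constant c(𝒯), and let μ̄ be a minimal measure (𝒯(μ̄, μ̄) = c(𝒯)). Then for each g ∈ C(X), lim_{n → ∞} (1/n) ∫_X T^n g dμ̄ = −c(𝒯). -/

import Mathlib

open MeasureTheory Filter Topology
open scoped ENNReal

/-- The `n`-fold inf-convolution iterates of a transfer functional:
`iterT 𝒯 n` is `𝒯_{n+1} = 𝒯 ⋆ ⋯ ⋆ 𝒯` (`n+1` factors). -/
noncomputable def iterT {X : Type*} [MeasurableSpace X]
    (𝒯 : ProbabilityMeasure X → ProbabilityMeasure X → EReal) :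
    ℕ → ProbabilityMeasure X → ProbabilityMeasure X → EReal
  | 0 => 𝒯
  | n + 1 => fun μ ν => ⨅ σ : ProbabilityMeasure X, 𝒯 μ σ + iterT 𝒯 n σ ν

open scoped BoundedContinuousFunction

lemma exists_mix {X : Type*} [MeasurableSpace X] (μ ν : ProbabilityMeasure X) (t : ℝ)
    (h0 : 0 ≤ t) (h1 : t ≤ 1) : ∃ ρ : ProbabilityMeasure X, (ρ : Measure X) =
      ENNReal.ofReal t • (μ : Measure X) + ENNReal.ofReal (1 - t) • (ν : Measure X) := by
  refine ⟨⟨ENNReal.ofReal t • (μ : Measure X) + ENNReal.ofReal (1 - t) • (ν : Measure X), ⟨?_⟩⟩,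
    rfl⟩
  simp only [Measure.coe_add, Measure.coe_smul, Pi.add_apply, Pi.smul_apply, measure_univ,
    smul_eq_mul, mul_one]
  rw [← ENNReal.ofReal_add h0 (by linarith)]
  simp

lemma integral_mix {X : Type*} [MetricSpace X] [CompactSpace X] [MeasurableSpace X]
    [BorelSpace X] (μ ν ρ : ProbabilityMeasure X) (t : ℝ)
    (h0 : 0 ≤ t) (h1 : t ≤ 1) (h : (ρ : Measure X) =
      ENNReal.ofReal t • (μ : Measure X) + ENNReal.ofReal (1 - t) • (ν : Measure X))
    (f : X →ᵇ ℝ) : ∫ x, f x ∂(ρ : Measure X) =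
      t * ∫ x, f x ∂(μ : Measure X) + (1 - t) * ∫ x, f x ∂(ν : Measure X) := by
  have e : ∀ s : ℝ, ENNReal.ofReal s ≠ ⊤ := fun s => ENNReal.ofReal_ne_top
  rw [h, integral_add_measure ((f.integrable _).smul_measure (e _))
    ((f.integrable _).smul_measure (e _)), integral_smul_measure, integral_smul_measure,
    ENNReal.toReal_ofReal h0, ENNReal.toReal_ofReal (by linarith)]
  simp

lemma iterT_bdd {X : Type*} [MeasurableSpace X]
    (𝒯 : ProbabilityMeasure X → ProbabilityMeasure X → EReal)
    (hbdd : ∃ m : ℝ, ∀ μ ν, (m : EReal) ≤ 𝒯 μ ν) (n : ℕ) :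
    ∃ m : ℝ, ∀ μ ν, (m : EReal) ≤ iterT 𝒯 n μ ν := by
  induction n with
  | zero => exact hbdd
  | succ n ih =>
    obtain ⟨m, hm⟩ := hbdd
    obtain ⟨k, hk⟩ := ih
    refine ⟨m + k, fun μ ν => ?_⟩
    simp only [iterT]
    refine le_iInf fun σ => ?_
    rw [EReal.coe_add]
    exact add_le_add (hm _ _) (hk _ _)

lemma iterT_diag {X : Type*} [MeasurableSpace X]
    (𝒯 : ProbabilityMeasure X → ProbabilityMeasure X → EReal) (c : ℝ)
    (μ : ProbabilityMeasure X) (h : 𝒯 μ μ = (c : EReal)) (n : ℕ) :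
    iterT 𝒯 n μ μ ≤ ((((n : ℝ) + 1) * c : ℝ) : EReal) := by
  induction n with
  | zero => simp [iterT, h]
  | succ n ih =>
    simp only [iterT]
    refine (iInf_le _ μ).trans ?_
    rw [h]
    refine (add_le_add le_rfl ih).trans ?_
    rw [← EReal.coe_add, EReal.coe_le_coe_iff]
    push_cast
    linarith

lemma averaging {X : Type*} [MetricSpace X] [CompactSpace X] [MeasurableSpace X] [BorelSpace X]
    (𝒯 : ProbabilityMeasure X → ProbabilityMeasure X → EReal)
    (hbdd : ∃ m : ℝ, ∀ μ ν, (m : EReal) ≤ 𝒯 μ ν)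
    (hconv : ∀ (μ₁ ν₁ μ₂ ν₂ μ ν : ProbabilityMeasure X) (t : ℝ), 0 ≤ t → t ≤ 1 →
      (μ : Measure X) =
        ENNReal.ofReal t • (μ₁ : Measure X) + ENNReal.ofReal (1 - t) • (μ₂ : Measure X) →
      (ν : Measure X) =
        ENNReal.ofReal t • (ν₁ : Measure X) + ENNReal.ofReal (1 - t) • (ν₂ : Measure X) →
      𝒯 μ ν ≤ (t : EReal) * 𝒯 μ₁ ν₁ + ((1 - t : ℝ) : EReal) * 𝒯 μ₂ ν₂) (n : ℕ) :
    ∀ (μ ν : ProbabilityMeasure X) (S : ℝ), iterT 𝒯 n μ ν < (S : EReal) →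
      ∃ α β : ProbabilityMeasure X, 𝒯 α β ≤ ((S / ((n : ℝ) + 1) : ℝ) : EReal) ∧
        ∀ f : X →ᵇ ℝ, ((n : ℝ) + 1) * ∫ x, f x ∂(α : Measure X) + ∫ x, f x ∂(ν : Measure X)
          = ∫ x, f x ∂(μ : Measure X) + ((n : ℝ) + 1) * ∫ x, f x ∂(β : Measure X) := by
  induction n with
  | zero =>
    intro μ ν S h
    refine ⟨μ, ν, ?_, ?_⟩
    · simpa [iterT] using h.le
    · intro f
      simp
  | succ n ih =>
    intro μ ν S h
    simp only [iterT] at h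
    obtain ⟨σ, hσ⟩ := iInf_lt_iff.1 h
    obtain ⟨m, hm⟩ := hbdd
    obtain ⟨k, hk⟩ := iterT_bdd 𝒯 ⟨m, hm⟩ n
    have b1 := hm μ σ
    have b2 := hk σ ν
    generalize hA : 𝒯 μ σ = A at *
    generalize hB : iterT 𝒯 n σ ν = B at *
    induction A with
    | bot => simp at b1
    | top =>
      rw [EReal.top_add_of_ne_bot (fun h => by simp [h] at b2)] at hσ
      simp at hσ
    | coe a =>
    induction B with
    | bot => simp at b2
    | top => simp at hσ
    | coe b =>
    rw [← EReal.coe_add, EReal.coe_lt_coe_iff] at hσ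
    obtain ⟨α', β', h1, h2⟩ := ih σ ν (S - a) (by
      rw [hB, EReal.coe_lt_coe_iff]; linarith)
    have hn : (0 : ℝ) ≤ n := n.cast_nonneg
    have t0 : (0 : ℝ) ≤ 1 / ((n : ℝ) + 2) := by positivity
    have t1 : 1 / ((n : ℝ) + 2) ≤ 1 := by
      rw [div_le_one (by linarith)]; linarith
    obtain ⟨α, hα⟩ := exists_mix μ α' _ t0 t1
    obtain ⟨β, hβ⟩ := exists_mix σ β' _ t0 t1
    refine ⟨α, β, ?_, ?_⟩
    · refine (hconv _ _ _ _ _ _ _ t0 t1 hα hβ).trans ?_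
      rw [hA]
      refine (add_le_add le_rfl (mul_le_mul_of_nonneg_left h1
        (EReal.coe_nonneg.2 (by linarith)))).trans ?_
      rw [← EReal.coe_mul, ← EReal.coe_mul, ← EReal.coe_add, EReal.coe_le_coe_iff]
      push_cast
      apply le_of_eq
      field_simp
      ring
    · intro f
      rw [integral_mix _ _ _ _ t0 t1 hα, integral_mix _ _ _ _ t0 t1 hβ]
      have := h2 f
      push_cast
      field_simp
      linear_combination ((n : ℝ) + 2) * this

lemma eventually_lower {X : Type*} [MetricSpace X] [CompactSpace X] [MeasurableSpace X]
    [BorelSpace X]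
    (𝒯 : ProbabilityMeasure X → ProbabilityMeasure X → EReal)
    (hbdd : ∃ m : ℝ, ∀ μ ν, (m : EReal) ≤ 𝒯 μ ν)
    (hlsc : LowerSemicontinuous
      (fun p : ProbabilityMeasure X × ProbabilityMeasure X => 𝒯 p.1 p.2))
    (hconv : ∀ (μ₁ ν₁ μ₂ ν₂ μ ν : ProbabilityMeasure X) (t : ℝ), 0 ≤ t → t ≤ 1 →
      (μ : Measure X) =
        ENNReal.ofReal t • (μ₁ : Measure X) + ENNReal.ofReal (1 - t) • (μ₂ : Measure X) →
      (ν : Measure X) =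
        ENNReal.ofReal t • (ν₁ : Measure X) + ENNReal.ofReal (1 - t) • (ν₂ : Measure X) →
      𝒯 μ ν ≤ (t : EReal) * 𝒯 μ₁ ν₁ + ((1 - t : ℝ) : EReal) * 𝒯 μ₂ ν₂)
    (c : ℝ) (hc : (c : EReal) = ⨅ μ, 𝒯 μ μ) (d : ℝ) (hd : d < c) :
    ∀ᶠ n : ℕ in atTop, ∀ μ ν : ProbabilityMeasure X,
      (((((n : ℝ) + 1) * d : ℝ)) : EReal) ≤ iterT 𝒯 n μ ν := by
  by_contra hcon
  have hfreq := not_eventually.1 hcon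
  have hex : ∀ n : ℕ, ∃ p : ProbabilityMeasure X × ProbabilityMeasure X,
      (¬ ∀ μ ν : ProbabilityMeasure X,
        (((((n : ℝ) + 1) * d : ℝ)) : EReal) ≤ iterT 𝒯 n μ ν) →
      𝒯 p.1 p.2 ≤ (d : EReal) ∧ ∀ f : X →ᵇ ℝ,
        |∫ x, f x ∂(p.1 : Measure X) - ∫ x, f x ∂(p.2 : Measure X)| ≤
          2 * ‖f‖ * (1 / ((n : ℝ) + 1)) := by
    intro n
    by_cases h : ∀ μ ν : ProbabilityMeasure X,
        (((((n : ℝ) + 1) * d : ℝ)) : EReal) ≤ iterT 𝒯 n μ ν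
    · obtain ⟨n0, hn0⟩ := hfreq.exists
      push Not at hn0
      obtain ⟨μ, ν, -⟩ := hn0
      exact ⟨(μ, ν), fun h' => absurd h h'⟩
    · have h' := h
      push Not at h'
      obtain ⟨μ, ν, hlt⟩ := h'
      obtain ⟨α, β, h1, h2⟩ := averaging 𝒯 hbdd hconv n μ ν _ hlt
      have hn : (0 : ℝ) < (n : ℝ) + 1 := by positivity
      refine ⟨(α, β), fun _ => ⟨?_, fun f => ?_⟩⟩
      · rwa [mul_div_cancel_left₀ _ hn.ne'] at h1
      · have e := h2 f
        have a1 := f.norm_integral_le_norm (μ := (μ : Measure X))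
        have a2 := f.norm_integral_le_norm (μ := (ν : Measure X))
        rw [Real.norm_eq_abs] at a1 a2
        have e' : ∫ x, f x ∂(α : Measure X) - ∫ x, f x ∂(β : Measure X) =
            (∫ x, f x ∂(μ : Measure X) - ∫ x, f x ∂(ν : Measure X)) * (1 / ((n : ℝ) + 1)) := by
          field_simp
          linarith
        dsimp only
        rw [e', abs_mul, abs_of_pos (one_div_pos.2 hn)]
        refine mul_le_mul_of_nonneg_right ?_ (one_div_pos.2 hn).le
        exact (abs_sub _ _).trans (by linarith)
  choose p hp using hex
  have := frequently_mem_iff_neBot.1 hfreq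
  obtain ⟨U, hU0⟩ := exists_ultrafilter_iff.2 this
  have hU : (U : Filter ℕ) ≤ atTop := hU0.trans inf_le_left
  have hbad : ∀ᶠ n : ℕ in (U : Filter ℕ), ¬ ∀ μ ν : ProbabilityMeasure X,
      (((((n : ℝ) + 1) * d : ℝ)) : EReal) ≤ iterT 𝒯 n μ ν :=
    le_principal_iff.1 (hU0.trans inf_le_right)
  obtain ⟨q, -, hq⟩ := isCompact_univ.ultrafilter_le_nhds (U.map p) (by simp)
  have hq' : Tendsto p U (𝓝 q) := hq
  have hgood := hbad.mono hp
  have h1 : 𝒯 q.1 q.2 ≤ (d : EReal) :=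
    (hlsc.isClosed_preimage (d : EReal)).mem_of_tendsto hq' (hgood.mono fun n h => h.1)
  have t1 := (continuous_fst.tendsto q).comp hq'
  have t2 := (continuous_snd.tendsto q).comp hq'
  rw [ProbabilityMeasure.tendsto_iff_forall_integral_tendsto] at t1 t2
  have heq : (q.1 : Measure X) = (q.2 : Measure X) := by
    apply ext_of_forall_integral_eq_of_IsFiniteMeasure
    intro f
    have t3 := (t1 f).sub (t2 f)
    have t4 : Tendsto (fun n : ℕ => 2 * ‖f‖ * (1 / ((n : ℝ) + 1))) U (𝓝 0) := by
      have := (tendsto_one_div_add_atTop_nhds_zero_nat (𝕜 := ℝ)).const_mul (2 * ‖f‖)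
      rw [mul_zero] at this
      exact this.mono_left hU
    have t5 := squeeze_zero_norm' (f := fun n : ℕ =>
      ∫ x, f x ∂((p n).1 : Measure X) - ∫ x, f x ∂((p n).2 : Measure X)) (hgood.mono fun n h => h.2 f) t4
    exact sub_eq_zero.1 (tendsto_nhds_unique t3 t5)
  have heq' : q.1 = q.2 := Subtype.ext heq
  have h2 : (c : EReal) ≤ 𝒯 q.1 q.2 := by
    rw [hc, ← heq']
    exact iInf_le _ _
  exact absurd (EReal.coe_le_coe_iff.1 (h2.trans h1)) (not_le.2 hd)

/-- Let `𝒯` be a backward linear transfer with Kantorovich operators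
`Tn n = T^{n+1}` (the Kantorovich operator of `𝒯_{n+1}`, given by the duality hypothesis
`hdual`), finite Mather constant `c`, and `μ̄` a minimal measure (`𝒯(μ̄, μ̄) = c`). Then for
each `g ∈ C(X)`, `(1/n) ∫_X T^n g dμ̄ → −c`. -/
theorem stmt5 {X : Type*} [MetricSpace X] [CompactSpace X] [MeasurableSpace X] [BorelSpace X]
    (𝒯 : ProbabilityMeasure X → ProbabilityMeasure X → EReal)
    (hproper : ∃ μ ν, 𝒯 μ ν ≠ ⊤)
    (hbdd : ∃ m : ℝ, ∀ μ ν, (m : EReal) ≤ 𝒯 μ ν)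
    (hlsc : LowerSemicontinuous
      (fun p : ProbabilityMeasure X × ProbabilityMeasure X => 𝒯 p.1 p.2))
    (hconv : ∀ (μ₁ ν₁ μ₂ ν₂ μ ν : ProbabilityMeasure X) (t : ℝ), 0 ≤ t → t ≤ 1 →
      (μ : Measure X) =
        ENNReal.ofReal t • (μ₁ : Measure X) + ENNReal.ofReal (1 - t) • (μ₂ : Measure X) →
      (ν : Measure X) =
        ENNReal.ofReal t • (ν₁ : Measure X) + ENNReal.ofReal (1 - t) • (ν₂ : Measure X) →
      𝒯 μ ν ≤ (t : EReal) * 𝒯 μ₁ ν₁ + ((1 - t : ℝ) : EReal) * 𝒯 μ₂ ν₂)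
    (c : ℝ) (hc : (c : EReal) = ⨅ μ, 𝒯 μ μ)
    (μbar : ProbabilityMeasure X) (hmin : 𝒯 μbar μbar = (c : EReal))
    (Tn : ℕ → C(X, ℝ) → X → ℝ)
    (hInt : ∀ (n : ℕ) (g : C(X, ℝ)), Integrable (Tn n g) (μbar : Measure X))
    (hdual : ∀ (n : ℕ) (g : C(X, ℝ)) (μ : ProbabilityMeasure X),
      (((∫ x, Tn n g x ∂(μ : Measure X)) : ℝ) : EReal) =
        ⨆ ν : ProbabilityMeasure X,
          (((∫ x, g x ∂(ν : Measure X)) : ℝ) : EReal) - iterT 𝒯 n μ ν) :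
    ∀ g : C(X, ℝ),
      Tendsto (fun n : ℕ => (∫ x, Tn n g x ∂(μbar : Measure X)) / ((n : ℝ) + 1))
        atTop (nhds (-c)) := by
  intro g
  have hpos : ∀ n : ℕ, (0 : ℝ) < (n : ℝ) + 1 := fun n => by positivity
  have hlow : ∀ n : ℕ, ∫ x, g x ∂(μbar : Measure X) - ((n : ℝ) + 1) * c ≤
      ∫ x, Tn n g x ∂(μbar : Measure X) := by
    intro n
    rw [← EReal.coe_le_coe_iff, hdual n g μbar, EReal.coe_sub]
    refine le_trans ?_ (le_iSup _ μbar)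
    exact EReal.sub_le_sub le_rfl (iterT_diag 𝒯 c μbar hmin n)
  have hup : ∀ d < c, ∀ᶠ n : ℕ in atTop,
      ∫ x, Tn n g x ∂(μbar : Measure X) ≤ ‖g‖ - ((n : ℝ) + 1) * d := by
    intro d hd
    filter_upwards [eventually_lower 𝒯 hbdd hlsc hconv c hc d hd] with n hn
    rw [← EReal.coe_le_coe_iff, hdual n g μbar, EReal.coe_sub]
    refine iSup_le fun ν => EReal.sub_le_sub ?_ (hn _ _)
    rw [EReal.coe_le_coe_iff]
    have := (BoundedContinuousFunction.mkOfCompact g).norm_integral_le_norm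
      (μ := (ν : Measure X))
    exact (le_abs_self _).trans (by simpa using this)
  have hz : ∀ K : ℝ, Tendsto (fun n : ℕ => K * (1 / ((n : ℝ) + 1))) atTop (𝓝 0) := by
    intro K
    simpa using (tendsto_one_div_add_atTop_nhds_zero_nat (𝕜 := ℝ)).const_mul K
  refine tendsto_order.2 ⟨fun a ha => ?_, fun a ha => ?_⟩
  · filter_upwards [(hz (∫ x, g x ∂(μbar : Measure X))).eventually
      (lt_mem_nhds (show a + c < 0 by linarith))] with n hn
    rw [lt_div_iff₀ (hpos n)]
    rw [mul_one_div, lt_div_iff₀ (hpos n)] at hn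
    have := hlow n
    linarith
  · filter_upwards [(hz ‖g‖).eventually (gt_mem_nhds (show 0 < (a + c) / 2 by linarith)),
      hup ((c - a) / 2) (by linarith)] with n hn h
    rw [div_lt_iff₀ (hpos n)]
    rw [mul_one_div, div_lt_iff₀ (hpos n)] at hn
    linarith
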